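/- Suppose the estimated nuisance functions μ̂, τ̂, ŵ are bounded and ρ̂(a,x) ≥ c for a constant c > 0. Then for P_A-almost every a, the conditional bias b̂(a) := E[φ̂(Z) − φ(Z) | A = a] admits the exact decomposition b̂(a) = E[(1 − ρ(a,X)/ρ̂(a,X))·(μ̂(a,X) − μ(a,X))·ŵ(a,V) | A = a] + E[(τ(a,V) − τ̂(a,V))·(ŵ(a,V) − w(a,V)) | A = a] + θ̂₀(a) − ∫ τ̂(a,v) dP_V(v). -/

import Mathlib

/-!
The kernel hypothesis says exactly that the law of `(A, ω)` under `P` is `P_A ⊗ₘ ν`. Hence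
`P`-null sets are `ν a`-null, `P`-integrable functions are `ν a`-integrable and `ν a` lives on
`A = a`, for `P_A`-almost every `a`; and a fibre integral `∫ F dν_a` is determined by the integrals
of `F` over the events `A ∈ B` (`ae_integral_kernel_eq`).

With arguments `(A, X)` and `(A, V)` suppressed, the two pseudo-outcomes without their `θ` terms are
* `R(Y - μ)·ŵ/ρ̂ + (R - ρ)·(μ - μ̂)ŵ/ρ̂ + (1 - ρ/ρ̂)(μ̂ - μ)ŵ + (μ - τ)ŵ + (τ - τ̂)ŵ`,
* `R(Y - μ)·w/ρ + (μ - τ)w`.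

Every term starting with `R(Y - μ)`, `R - ρ` or `μ - τ` has zero fibre integral, by the defining
property of the corresponding nuisance function. Those properties are only given for bounded test
functions while `w` is unbounded, so `ae_integral_kernel_orthogonal` extends them by truncation and
dominated convergence. What remains is compared with the right-hand side through
`∫ g(a, V) w(a, V) dν_a = ∫ g(a, v) dP_V(v)` for bounded `g` (`ae_integral_kernel_weight`), applied
to `g = τ - τ̂`: since `π` is a genuine joint density and `w π = f`, weighting by `w` turns the law
of `(A, V)` into `P_A × P_V`. This also shows that `w(A, V)` is integrable.
-/

open MeasureTheory ProbabilityTheory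

/-! ### Disintegration along the treatment -/

section Disintegration

variable {Ω : Type*} [MeasurableSpace Ω] {P : Measure Ω} {A : Ω → ℝ} {ν : Kernel ℝ Ω}

lemma map_prodMk_eq_compProd [IsProbabilityMeasure P] [IsMarkovKernel ν] (hA : Measurable A)
    (hν : ∀ (u : ℝ → ℝ) (F : Ω → ℝ), Measurable u → (∃ C, ∀ a, |u a| ≤ C) →
      Measurable F → (∃ C, ∀ ω, |F ω| ≤ C) →
      ∫ ω, u (A ω) * F ω ∂P = ∫ a, u a * ∫ ω, F ω ∂(ν a) ∂(P.map A)) :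
    P.map (fun ω => (A ω, ω)) = (P.map A) ⊗ₘ ν := by
  have hpair : Measurable (fun ω => (A ω, ω)) := hA.prodMk measurable_id
  have : IsProbabilityMeasure (P.map A) := Measure.isProbabilityMeasure_map hA.aemeasurable
  have : IsProbabilityMeasure (P.map (fun ω => (A ω, ω))) :=
    Measure.isProbabilityMeasure_map hpair.aemeasurable
  refine Measure.ext_prod fun {s t} hs ht => ?_
  have hbs : ∃ C, ∀ a, |s.indicator (fun _ => (1 : ℝ)) a| ≤ C :=
    ⟨1, fun a => by by_cases h : a ∈ s <;> simp [h]⟩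
  have hbt : ∃ C, ∀ a, |t.indicator (fun _ => (1 : ℝ)) a| ≤ C :=
    ⟨1, fun a => by by_cases h : a ∈ t <;> simp [h]⟩
  have key := hν (s.indicator fun _ => 1) (t.indicator fun _ => 1)
    (measurable_const.indicator hs) hbs (measurable_const.indicator ht) hbt
  rw [← ENNReal.toReal_eq_toReal_iff' (measure_ne_top _ _) (measure_ne_top _ _)]
  have hL : ((P.map (fun ω => (A ω, ω))) (s ×ˢ t)).toReal
      = ∫ ω, s.indicator (fun _ => (1 : ℝ)) (A ω) * t.indicator (fun _ => 1) ω ∂P := by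
    rw [Measure.map_apply hpair (hs.prod ht)]
    have : (fun ω => s.indicator (fun _ => (1 : ℝ)) (A ω) * t.indicator (fun _ => 1) ω)
        = ((fun ω => (A ω, ω)) ⁻¹' (s ×ˢ t)).indicator 1 := by
      ext ω
      by_cases h1 : A ω ∈ s <;> by_cases h2 : ω ∈ t <;> simp [h1, h2]
    rw [this, integral_indicator_one (hpair (hs.prod ht))]
    rfl
  have hR : (((P.map A) ⊗ₘ ν) (s ×ˢ t)).toReal
      = ∫ a, s.indicator (fun _ => (1 : ℝ)) a * ∫ ω, t.indicator (fun _ => 1) ω ∂(ν a)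
          ∂(P.map A) := by
    rw [Measure.compProd_apply_prod hs ht, ← integral_toReal
      (Kernel.measurable_coe ν ht).aemeasurable (ae_of_all _ fun a => measure_lt_top _ _),
      ← integral_indicator hs]
    congr 1
    ext a
    have : ∫ ω, t.indicator (fun _ => (1 : ℝ)) ω ∂(ν a) = ((ν a) t).toReal :=
      integral_indicator_one ht
    rw [this]
    by_cases h1 : a ∈ s <;> simp [h1]
  rw [hL, hR, key]

lemma measurePreserving_snd_map_prodMk (hA : Measurable A) :
    MeasurePreserving Prod.snd (P.map (fun ω => (A ω, ω))) P := by
  refine ⟨measurable_snd, ?_⟩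
  rw [Measure.map_map measurable_snd (by fun_prop)]
  exact Measure.map_id

lemma ae_ae_kernel [IsFiniteMeasure P] [IsMarkovKernel ν] (hA : Measurable A) (hJ : P.map (fun ω => (A ω, ω)) = (P.map A) ⊗ₘ ν)
    {p : Ω → Prop} (hp : ∀ᵐ ω ∂P, p ω) : ∀ᵐ a ∂(P.map A), ∀ᵐ ω ∂(ν a), p ω := by
  have h := (measurePreserving_snd_map_prodMk (P := P) hA).quasiMeasurePreserving.ae hp
  rw [hJ] at h
  exact Measure.ae_ae_of_ae_compProd h

/-- The fibre measure `ν a` is concentrated on the event `A = a`. -/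
lemma ae_ae_fiber_eq [IsFiniteMeasure P] [IsMarkovKernel ν] (hA : Measurable A) (hJ : P.map (fun ω => (A ω, ω)) = (P.map A) ⊗ₘ ν) :
    ∀ᵐ a ∂(P.map A), ∀ᵐ ω ∂(ν a), A ω = a := by
  have h : ∀ᵐ p ∂(P.map (fun ω => (A ω, ω))), A p.2 = p.1 := by
    have hms : MeasurableSet {p : ℝ × Ω | A p.2 = p.1} :=
      measurableSet_eq_fun (hA.comp measurable_snd) measurable_fst
    exact (ae_map_iff (by fun_prop) hms).2 (ae_of_all _ fun ω => rfl)
  rw [hJ] at h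
  exact Measure.ae_ae_of_ae_compProd h

lemma integrable_compProd_of_integrable (hA : Measurable A)
    (hJ : P.map (fun ω => (A ω, ω)) = (P.map A) ⊗ₘ ν) {F : Ω → ℝ} (hF : Integrable F P) :
    Integrable (fun p : ℝ × Ω => F p.2) ((P.map A) ⊗ₘ ν) := by
  rw [← hJ]
  exact (measurePreserving_snd_map_prodMk hA).integrable_comp_of_integrable hF

lemma ae_integrable_kernel [IsFiniteMeasure P] [IsMarkovKernel ν] (hA : Measurable A)
    (hJ : P.map (fun ω => (A ω, ω)) = (P.map A) ⊗ₘ ν) {F : Ω → ℝ} (hF : Integrable F P) :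
    ∀ᵐ a ∂(P.map A), Integrable F (ν a) := by
  have h := integrable_compProd_of_integrable hA hJ hF
  exact ((Measure.integrable_compProd_iff h.aestronglyMeasurable).1 h).1

/-- The fibre integrals of `F` are identified `P_A`-almost everywhere by the integrals of `F`
over the events `A ∈ B`. -/
lemma ae_integral_kernel_eq [IsFiniteMeasure P] [IsMarkovKernel ν] (hA : Measurable A)
    (hJ : P.map (fun ω => (A ω, ω)) = (P.map A) ⊗ₘ ν) {F : Ω → ℝ} (hF : Integrable F P)
    {G : ℝ → ℝ} (hG : Integrable G (P.map A))
    (h : ∀ B, MeasurableSet B → ∫ ω in A ⁻¹' B, F ω ∂P = ∫ a in B, G a ∂(P.map A)) :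
    ∀ᵐ a ∂(P.map A), ∫ ω, F ω ∂(ν a) = G a := by
  have hI := integrable_compProd_of_integrable hA hJ hF
  have hint : Integrable (fun a => ∫ ω, F ω ∂(ν a)) (P.map A) := by
    unfold Measure.compProd at hI
    exact hI.integral_compProd
  refine Integrable.ae_eq_of_forall_setIntegral_eq _ _ hint hG fun B hB _ => ?_
  have h1 := Measure.setIntegral_compProd hB MeasurableSet.univ (hI.integrableOn (s := B ×ˢ .univ))
  simp only [Measure.restrict_univ] at h1
  have hsm := hI.aestronglyMeasurable
  rw [← h1, ← h B hB]
  rw [← hJ] at hsm ⊢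
  rw [setIntegral_map (hB.prod .univ) hsm (by fun_prop)]
  congr 2
  ext ω
  simp

/-- If `D₁` and `D₂` have the same conditional expectation given `(A, W)`, tested against bounded
functions, then `(D₁ - D₂) · k(A, W)` has vanishing fibre integrals for every `k`, possibly
unbounded, for which that product is integrable. -/
lemma ae_integral_kernel_orthogonal [IsFiniteMeasure P] [IsMarkovKernel ν] {E : Type*} [MeasurableSpace E] (hA : Measurable A)
    (hJ : P.map (fun ω => (A ω, ω)) = (P.map A) ⊗ₘ ν) {W : Ω → E} (hW : Measurable W)
    {D₁ D₂ : Ω → ℝ} (hD₁ : Integrable D₁ P) (hD₂ : Integrable D₂ P)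
    (hD : ∀ h : ℝ → E → ℝ, Measurable (Function.uncurry h) → (∃ C, ∀ a x, |h a x| ≤ C) →
      ∫ ω, D₁ ω * h (A ω) (W ω) ∂P = ∫ ω, D₂ ω * h (A ω) (W ω) ∂P)
    {k : ℝ → E → ℝ} (hk : Measurable (Function.uncurry k))
    (hint : Integrable (fun ω => (D₁ ω - D₂ ω) * k (A ω) (W ω)) P) :
    ∀ᵐ a ∂(P.map A), ∫ ω, (D₁ ω - D₂ ω) * k (A ω) (W ω) ∂(ν a) = 0 := by
  refine ae_integral_kernel_eq hA hJ hint (G := fun _ => 0) (integrable_zero _ _ _) fun B hB => ?_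
  rw [integral_zero, ← integral_indicator (hA hB)]
  have hAW : Measurable (fun ω => (A ω, W ω)) := hA.prodMk hW
  -- truncate `k` at level `n`, and localise to `A ∈ B`
  let T : ℕ → Set (ℝ × E) := fun n => {p | |k p.1 p.2| ≤ n} ∩ Prod.fst ⁻¹' B
  have hT : ∀ n, MeasurableSet (T n) := fun n =>
    (measurableSet_le (measurable_norm.comp hk) measurable_const).inter (measurable_fst hB)
  let h : ℕ → ℝ → E → ℝ := fun n a x => (T n).indicator (Function.uncurry k) (a, x)
  have hm : ∀ n, Measurable (Function.uncurry (h n)) := fun n => hk.indicator (hT n)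
  have hbd : ∀ n : ℕ, ∀ a x, |h n a x| ≤ n := by
    intro n a x
    by_cases hp : (a, x) ∈ T n
    · simpa [h, hp] using hp.1
    · simp [h, hp]
  have hz : ∀ n, ∫ ω, (D₁ ω - D₂ ω) * h n (A ω) (W ω) ∂P = 0 := by
    intro n
    have hs : AEStronglyMeasurable (fun ω => h n (A ω) (W ω)) P :=
      ((hm n).comp hAW).aestronglyMeasurable
    have hb : ∀ᵐ ω ∂P, ‖h n (A ω) (W ω)‖ ≤ (n : ℝ) := ae_of_all _ fun ω => hbd n _ _
    simp only [sub_mul]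
    rw [integral_sub (hD₁.mul_bdd hs hb) (hD₂.mul_bdd hs hb), hD _ (hm n) ⟨n, hbd n⟩, sub_self]
  have hlim := tendsto_integral_of_dominated_convergence
    (F := fun n ω => (D₁ ω - D₂ ω) * h n (A ω) (W ω))
    (f := (A ⁻¹' B).indicator fun ω => (D₁ ω - D₂ ω) * k (A ω) (W ω))
    (fun ω => ‖(D₁ ω - D₂ ω) * k (A ω) (W ω)‖)
    (fun n => (hD₁.sub hD₂).aestronglyMeasurable.mul ((hm n).comp hAW).aestronglyMeasurable)
    hint.norm
    (fun n => ae_of_all _ fun ω => by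
      by_cases hp : (A ω, W ω) ∈ T n
      · simp [h, hp]
      · simp only [h, hp, not_false_eq_true, Set.indicator_of_notMem, mul_zero, norm_zero]
        positivity)
    (ae_of_all _ fun ω => by
      obtain ⟨N, hN⟩ := exists_nat_ge |k (A ω) (W ω)|
      refine tendsto_atTop_of_eventually_const (i₀ := N) fun n hn => ?_
      have hle : |k (A ω) (W ω)| ≤ n := hN.trans (by exact_mod_cast hn)
      by_cases hB' : A ω ∈ B
      · have hp : (A ω, W ω) ∈ T n := ⟨hle, hB'⟩
        simp [h, hp, hB']
      · have hp : (A ω, W ω) ∉ T n := fun hp => hB' hp.2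
        simp [h, hp, hB'])
  simp only [hz] at hlim
  exact tendsto_nhds_unique hlim tendsto_const_nhds

end Disintegration

/-! ### The stabilized weight -/

section Density

variable {𝒱 Ω : Type*} [MeasurableSpace 𝒱] [MeasurableSpace Ω] {P : Measure Ω}
  [IsProbabilityMeasure P] {V : Ω → 𝒱} {A : Ω → ℝ} {π : ℝ → 𝒱 → ℝ}

/-- Testing against functions of `v` alone forces `∫ π(a|v) da = 1` for `P_V`-almost every `v`, so
almost every section of `π` is integrable and `π` is integrable for `Lebesgue × P_V`. -/
lemma integrable_density (hV : Measurable V) (hπ_meas : Measurable (Function.uncurry π))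
    (hπ_nonneg : ∀ a v, 0 ≤ π a v)
    (hdens : ∀ g : ℝ → 𝒱 → ℝ, Measurable (Function.uncurry g) →
      (∃ C, ∀ a v, |g a v| ≤ C) →
      ∫ ω, g (A ω) (V ω) ∂P = ∫ v, ∫ a, g a v * π a v ∂volume ∂(P.map V)) :
    Integrable (Function.uncurry π) (volume.prod (P.map V)) := by
  have : IsProbabilityMeasure (P.map V) := Measure.isProbabilityMeasure_map hV.aemeasurable
  have h1 : ∫ v, ∫ a, π a v ∂volume ∂(P.map V) = 1 := by
    have := hdens (fun _ _ => 1) measurable_const ⟨1, fun _ _ => by simp⟩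
    simpa using this.symm
  have hI : Integrable (fun v => ∫ a, π a v ∂volume) (P.map V) :=
    .of_integral_ne_zero (by rw [h1]; exact one_ne_zero)
  have hone : (fun v => ∫ a, π a v ∂volume) =ᵐ[P.map V] fun _ => 1 := by
    refine Integrable.ae_eq_of_forall_setIntegral_eq _ _ hI (integrable_const _) fun C hC _ => ?_
    have h2 := hdens (fun _ v => C.indicator (fun _ => 1) v)
      ((measurable_const.indicator hC).comp measurable_snd)
      ⟨1, fun _ v => by by_cases h : v ∈ C <;> simp [h]⟩
    have h3 : ∫ ω, C.indicator (fun _ => (1 : ℝ)) (V ω) ∂P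
        = ∫ v, C.indicator (fun _ => (1 : ℝ)) v ∂(P.map V) :=
      (integral_map hV.aemeasurable
        (measurable_const.indicator hC).aestronglyMeasurable).symm
    rw [h3, integral_indicator hC] at h2
    rw [h2, ← integral_indicator hC]
    congr 1
    ext v
    by_cases h : v ∈ C <;> simp [h]
  rw [integrable_prod_iff' hπ_meas.aestronglyMeasurable]
  constructor
  · filter_upwards [hone] with v hv
    exact .of_integral_ne_zero (f := fun a => π a v) (by rw [hv]; exact one_ne_zero)
  · refine hI.congr (ae_of_all _ fun v => ?_)
    simp [Function.uncurry, abs_of_nonneg (hπ_nonneg _ _)]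

/-- The joint law of `(A, V)` has density `π` with respect to `Lebesgue × P_V`. -/
lemma map_prod_eq_withDensity (hV : Measurable V) (hA : Measurable A)
    (hπ_meas : Measurable (Function.uncurry π)) (hπ_nonneg : ∀ a v, 0 ≤ π a v)
    (hdens : ∀ g : ℝ → 𝒱 → ℝ, Measurable (Function.uncurry g) →
      (∃ C, ∀ a v, |g a v| ≤ C) →
      ∫ ω, g (A ω) (V ω) ∂P = ∫ v, ∫ a, g a v * π a v ∂volume ∂(P.map V)) :
    P.map (fun ω => (A ω, V ω))
      = (volume.prod (P.map V)).withDensity (fun p => ENNReal.ofReal (π p.1 p.2)) := by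
  have : IsProbabilityMeasure (P.map V) := Measure.isProbabilityMeasure_map hV.aemeasurable
  have hI := integrable_density hV hπ_meas hπ_nonneg hdens
  have hAV : Measurable (fun ω => (A ω, V ω)) := hA.prodMk hV
  ext E hE
  rw [Measure.map_apply hAV hE, withDensity_apply _ hE]
  have h1 := hdens (fun a v => E.indicator (fun _ => 1) (a, v)) (measurable_const.indicator hE)
    ⟨1, fun a v => by by_cases h : (a, v) ∈ E <;> simp [h]⟩
  have h2 : ∫ ω, E.indicator (fun _ => (1 : ℝ)) (A ω, V ω) ∂P
      = (P ((fun ω => (A ω, V ω)) ⁻¹' E)).toReal :=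
    integral_indicator_one (hAV hE)
  have h3 : ∀ p : ℝ × 𝒱, E.indicator (Function.uncurry π) p
      = E.indicator (fun _ => 1) (p.1, p.2) * π p.1 p.2 := fun p => by
    by_cases h : p ∈ E <;> simp [h, Function.uncurry]
  have h4 : ∫ v, ∫ a, E.indicator (fun _ => 1) (a, v) * π a v ∂volume ∂(P.map V)
      = ∫ p in E, π p.1 p.2 ∂(volume.prod (P.map V)) := by
    have := integral_prod_symm _ (hI.indicator hE)
    rw [integral_indicator hE] at this
    simp only [h3] at this
    exact this.symm
  rw [h2, h4] at h1
  rw [← ENNReal.ofReal_toReal (measure_ne_top P _), h1]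
  exact ofReal_integral_eq_lintegral_ofReal hI.integrableOn (ae_of_all _ fun p => hπ_nonneg _ _)

variable {f : ℝ → ℝ} {w : ℝ → 𝒱 → ℝ}

lemma measurable_marginal (hπ_meas : Measurable (Function.uncurry π))
    (hf : ∀ a, f a = ∫ v, π a v ∂(P.map V)) : Measurable f := by
  have : f = fun a => ∫ v, π a v ∂(P.map V) := funext hf
  rw [this]
  exact (hπ_meas.stronglyMeasurable.integral_prod_right).measurable

lemma measurable_weight (hπ_meas : Measurable (Function.uncurry π))
    (hf : ∀ a, f a = ∫ v, π a v ∂(P.map V)) (hw : ∀ a v, w a v = f a / π a v) :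
    Measurable (Function.uncurry w) := by
  have : Function.uncurry w = fun p => f p.1 / π p.1 p.2 := funext fun p => hw _ _
  rw [this]
  exact ((measurable_marginal hπ_meas hf).comp measurable_fst).div hπ_meas

/-- The weighted law `w · P_{(A,V)}` is the product of the marginals: integrating `g · w` against
the law of `(A, V)` is integrating `g(a,v) f(a)` against `Lebesgue × P_V`. -/
lemma weight_change_of_measure (hV : Measurable V) (hA : Measurable A)
    (hπ_meas : Measurable (Function.uncurry π)) (hπ_nonneg : ∀ a v, 0 ≤ π a v)
    (hdens : ∀ g : ℝ → 𝒱 → ℝ, Measurable (Function.uncurry g) →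
      (∃ C, ∀ a v, |g a v| ≤ C) →
      ∫ ω, g (A ω) (V ω) ∂P = ∫ v, ∫ a, g a v * π a v ∂volume ∂(P.map V))
    (hf : ∀ a, f a = ∫ v, π a v ∂(P.map V))
    (hπ_pos : ∀ᵐ p ∂(volume.prod (P.map V)), 0 < π p.1 p.2)
    (hw : ∀ a v, w a v = f a / π a v)
    {g : ℝ → 𝒱 → ℝ} (hg : Measurable (Function.uncurry g)) (hgb : ∃ C, ∀ a v, |g a v| ≤ C) :
    Integrable (fun p : ℝ × 𝒱 => g p.1 p.2 * f p.1) (volume.prod (P.map V)) ∧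
    Integrable (fun ω => g (A ω) (V ω) * w (A ω) (V ω)) P ∧
    ∫ ω, g (A ω) (V ω) * w (A ω) (V ω) ∂P
      = ∫ p, g p.1 p.2 * f p.1 ∂(volume.prod (P.map V)) := by
  have : IsProbabilityMeasure (P.map V) := Measure.isProbabilityMeasure_map hV.aemeasurable
  have hAV : Measurable (fun ω => (A ω, V ω)) := hA.prodMk hV
  have hI := integrable_density hV hπ_meas hπ_nonneg hdens
  have hfI : Integrable f volume := hI.integral_prod_left.congr (ae_of_all _ fun a => (hf a).symm)
  obtain ⟨C, hC⟩ := hgb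
  have hint : Integrable (fun p : ℝ × 𝒱 => g p.1 p.2 * f p.1) (volume.prod (P.map V)) :=
    (hfI.comp_fst _).bdd_mul hg.aestronglyMeasurable (ae_of_all _ fun p => hC p.1 p.2)
  have hofm : Measurable (fun p : ℝ × 𝒱 => ENNReal.ofReal (π p.1 p.2)) := hπ_meas.ennreal_ofReal
  have hcancel : (fun p : ℝ × 𝒱 => g p.1 p.2 * w p.1 p.2 * (ENNReal.ofReal (π p.1 p.2)).toReal)
      =ᵐ[volume.prod (P.map V)] fun p => g p.1 p.2 * f p.1 := by
    filter_upwards [hπ_pos] with p hp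
    rw [ENNReal.toReal_ofReal hp.le, hw]
    field_simp
  have hsm : Measurable (fun p : ℝ × 𝒱 => g p.1 p.2 * w p.1 p.2) :=
    hg.mul (measurable_weight hπ_meas hf hw)
  have hlaw := map_prod_eq_withDensity hV hA hπ_meas hπ_nonneg hdens
  have hIm : Integrable (fun p : ℝ × 𝒱 => g p.1 p.2 * w p.1 p.2)
      (P.map (fun ω => (A ω, V ω))) := by
    rw [hlaw, integrable_withDensity_iff hofm (ae_of_all _ fun _ => ENNReal.ofReal_lt_top)]
    exact hint.congr hcancel.symm
  refine ⟨hint, hIm.comp_measurable hAV, ?_⟩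
  have h1 := integral_map (μ := P) hAV.aemeasurable
    (f := fun p : ℝ × 𝒱 => g p.1 p.2 * w p.1 p.2) hsm.aestronglyMeasurable
  rw [← h1, hlaw, integral_withDensity_eq_integral_toReal_smul hofm
    (ae_of_all _ fun _ => ENNReal.ofReal_lt_top), ← integral_congr_ae hcancel]
  simp only [smul_eq_mul, mul_comm]

/-- Weighting by `w` turns the conditional law of `V` given `A = a` into its marginal law. -/
lemma ae_integral_kernel_weight {ν : Kernel ℝ Ω} [IsMarkovKernel ν]
    (hV : Measurable V) (hA : Measurable A)
    (hJ : P.map (fun ω => (A ω, ω)) = (P.map A) ⊗ₘ ν)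
    (hπ_meas : Measurable (Function.uncurry π)) (hπ_nonneg : ∀ a v, 0 ≤ π a v)
    (hdens : ∀ g : ℝ → 𝒱 → ℝ, Measurable (Function.uncurry g) →
      (∃ C, ∀ a v, |g a v| ≤ C) →
      ∫ ω, g (A ω) (V ω) ∂P = ∫ v, ∫ a, g a v * π a v ∂volume ∂(P.map V))
    (hf : ∀ a, f a = ∫ v, π a v ∂(P.map V))
    (hπ_pos : ∀ᵐ p ∂(volume.prod (P.map V)), 0 < π p.1 p.2)
    (hw : ∀ a v, w a v = f a / π a v)
    {g : ℝ → 𝒱 → ℝ} (hg : Measurable (Function.uncurry g)) (hgb : ∃ C, ∀ a v, |g a v| ≤ C) :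
    ∀ᵐ a ∂(P.map A), ∫ ω, g (A ω) (V ω) * w (A ω) (V ω) ∂(ν a) = ∫ v, g a v ∂(P.map V) := by
  have hQ : IsProbabilityMeasure (P.map V) := Measure.isProbabilityMeasure_map hV.aemeasurable
  have hPA : IsProbabilityMeasure (P.map A) := Measure.isProbabilityMeasure_map hA.aemeasurable
  have key := fun {g : ℝ → 𝒱 → ℝ} (hg : Measurable (Function.uncurry g)) hgb =>
    weight_change_of_measure hV hA hπ_meas hπ_nonneg hdens hf hπ_pos hw (g := g) hg hgb
  obtain ⟨C, hC⟩ := hgb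
  let G : ℝ → ℝ := fun a => ∫ v, g a v ∂(P.map V)
  have hGm : Measurable G := (hg.stronglyMeasurable.integral_prod_right).measurable
  have hGb : ∀ a, |G a| ≤ C := fun a => by
    have := norm_integral_le_of_norm_le_const (μ := P.map V) (f := g a) (C := C)
      (ae_of_all _ (hC a))
    simpa using this
  have hGI : Integrable G (P.map A) :=
    .of_bound hGm.aestronglyMeasurable C (ae_of_all _ hGb)
  refine ae_integral_kernel_eq hA hJ (key hg ⟨C, hC⟩).2.1 hGI fun B hB => ?_
  have hC0 : 0 ≤ C := (abs_nonneg _).trans (hGb 0)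
  -- both sides reduce to `∫_B G(a) f(a) da`
  have hgB := key (g := fun a v => B.indicator (fun _ => 1) a * g a v)
    ((((measurable_const (a := (1 : ℝ))).indicator hB).comp measurable_fst).mul hg)
    ⟨C, fun a v => by by_cases h : a ∈ B <;> simp [h, hC, hC0]⟩
  have hL : ∫ ω in A ⁻¹' B, g (A ω) (V ω) * w (A ω) (V ω) ∂P
      = ∫ a, B.indicator (fun _ => 1) a * G a * f a := by
    rw [← integral_indicator (hA hB)]
    have h1 : ∀ ω, (A ⁻¹' B).indicator (fun ω => g (A ω) (V ω) * w (A ω) (V ω)) ω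
        = B.indicator (fun _ => 1) (A ω) * g (A ω) (V ω) * w (A ω) (V ω) := fun ω => by
      by_cases h : A ω ∈ B <;> simp [h]
    simp only [h1]
    rw [hgB.2.2, integral_prod _ hgB.1]
    simp only [integral_mul_const, integral_const_mul, G]
  have hR : ∫ a in B, G a ∂(P.map A) = ∫ a, B.indicator (fun _ => 1) a * G a * f a := by
    have hBG : Measurable (fun a => B.indicator (fun _ => 1) a * G a) :=
      (measurable_const.indicator hB).mul hGm
    have hbd : ∀ a, |B.indicator (fun _ => 1) a * G a| ≤ C := fun a => by
      by_cases h : a ∈ B <;> simp [h, hGb, hC0]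
    have h1 : ∀ a, B.indicator G a = B.indicator (fun _ => 1) a * G a := fun a => by
      by_cases h : a ∈ B <;> simp [h]
    rw [← integral_indicator hB, integral_map hA.aemeasurable
      (hGm.indicator hB).aestronglyMeasurable]
    simp only [h1]
    rw [hdens (fun a _ => B.indicator (fun _ => 1) a * G a) (hBG.comp measurable_fst)
      ⟨C, fun a _ => hbd a⟩]
    have hI : Integrable (fun p : ℝ × 𝒱 => B.indicator (fun _ => 1) p.1 * G p.1 * π p.1 p.2)
        (volume.prod (P.map V)) :=
      (integrable_density hV hπ_meas hπ_nonneg hdens).bdd_mul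
        (hBG.comp measurable_fst).aestronglyMeasurable (ae_of_all _ fun p => hbd p.1)
    rw [← integral_prod_symm _ hI, integral_prod _ hI]
    simp only [integral_const_mul, hf]
  rw [hL, hR]

end Density

/-! ### The propensity bound and the decomposition -/

lemma memLp_top_mul {Ω : Type*} [MeasurableSpace Ω] {P : Measure Ω} {F G : Ω → ℝ}
    (hF : MemLp F ⊤ P) (hG : MemLp G ⊤ P) : MemLp (fun ω => F ω * G ω) ⊤ P :=
  hG.mul hF

/-- A version of a conditional probability is at most `1`; testing against bounded functions forces
the proof through the bounded pieces `1 < ρ ≤ n`, since `ρ` is not assumed integrable. -/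
lemma ae_propensity_le_one {E Ω : Type*} [MeasurableSpace E] [MeasurableSpace Ω] {P : Measure Ω}
    [IsProbabilityMeasure P] {A R : Ω → ℝ} {X : Ω → E} (hA : Measurable A) (hX : Measurable X)
    (hR : Measurable R) (hR01 : ∀ ω, R ω = 0 ∨ R ω = 1)
    {ρ : ℝ → E → ℝ} (hρ_meas : Measurable (Function.uncurry ρ))
    (hρ : ∀ h : ℝ → E → ℝ, Measurable (Function.uncurry h) → (∃ C, ∀ a x, |h a x| ≤ C) →
      ∫ ω, R ω * h (A ω) (X ω) ∂P = ∫ ω, ρ (A ω) (X ω) * h (A ω) (X ω) ∂P) :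
    ∀ᵐ ω ∂P, ρ (A ω) (X ω) ≤ 1 := by
  have hAX : Measurable (fun ω => (A ω, X ω)) := hA.prodMk hX
  have key : ∀ n : ℕ, ∀ᵐ ω ∂P, ¬ (1 < ρ (A ω) (X ω) ∧ ρ (A ω) (X ω) ≤ n) := by
    intro n
    let T : Set (ℝ × E) := {p | 1 < ρ p.1 p.2} ∩ {p | ρ p.1 p.2 ≤ n}
    have hT : MeasurableSet T :=
      (measurableSet_lt measurable_const hρ_meas).inter
        (measurableSet_le hρ_meas measurable_const)
    have hhm : Measurable (T.indicator fun _ => (1 : ℝ)) := measurable_const.indicator hT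
    have hh := hρ (fun a x => T.indicator (fun _ => 1) (a, x)) hhm
      ⟨1, fun a x => by by_cases h : (a, x) ∈ T <;> simp [h]⟩
    have hRI : Integrable (fun ω => R ω * T.indicator (fun _ => 1) (A ω, X ω)) P := by
      refine .of_bound (hR.mul (hhm.comp hAX)).aestronglyMeasurable 1 (ae_of_all _ fun ω => ?_)
      rcases hR01 ω with h | h <;> by_cases h' : (A ω, X ω) ∈ T <;> simp [h, h']
    have hρI : Integrable (fun ω => ρ (A ω) (X ω) * T.indicator (fun _ => 1) (A ω, X ω)) P := by
      refine .of_bound ((hρ_meas.comp hAX).mul (hhm.comp hAX)).aestronglyMeasurable n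
        (ae_of_all _ fun ω => ?_)
      by_cases h' : (A ω, X ω) ∈ T
      · have h1 : 1 < ρ (A ω) (X ω) := h'.1
        have h2 : ρ (A ω) (X ω) ≤ n := h'.2
        simpa [h', abs_of_pos (zero_lt_one.trans h1)] using h2
      · simp [h']
    have hnn : 0 ≤ fun ω => ρ (A ω) (X ω) * T.indicator (fun _ => 1) (A ω, X ω)
        - R ω * T.indicator (fun _ => 1) (A ω, X ω) := fun ω => by
      by_cases h' : (A ω, X ω) ∈ T
      · have h1 : 1 < ρ (A ω) (X ω) := h'.1
        rcases hR01 ω with h | h <;> simp [h, h'] <;> linarith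
      · simp [h']
    have h0 := (integral_eq_zero_iff_of_nonneg hnn (hρI.sub hRI)).1
      (by rw [integral_sub hρI hRI, hh, sub_self])
    filter_upwards [h0] with ω hω hcon
    have h' : (A ω, X ω) ∈ T := hcon
    simp only [h', Set.indicator_of_mem, mul_one, Pi.zero_apply] at hω
    rcases hR01 ω with h | h <;> linarith [hcon.1]
  filter_upwards [ae_all_iff.2 key] with ω hω
  obtain ⟨n, hn⟩ := exists_nat_ge (ρ (A ω) (X ω))
  by_contra hlt
  exact hω n ⟨not_le.1 hlt, hn⟩

/-- **exact decomposition of the conditional bias.** With stabilized weight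
`w(a,v) = f(a)/π(a|v)`, true pseudo-outcome
`φ(Z) = [R(Y − μ(A,X))/ρ(A,X) + μ(A,X) − τ(A,V)]·w(A,V) + θ(A)`, estimated nuisances
`μ̂, τ̂, ρ̂, ŵ` (with `μ̂, τ̂, ŵ` bounded and `ρ̂ ≥ c`), fixed points `v₁,…,v_m`,
`θ̂₀(a) = m⁻¹ Σᵢ τ̂(a,vᵢ)` and estimated pseudo-outcome
`φ̂(Z) = [R(Y − μ̂(A,X))/ρ̂(A,X) + μ̂(A,X) − τ̂(A,V)]·ŵ(A,V) + θ̂₀(A)`, the conditional bias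
`b̂(a) = E[φ̂(Z) − φ(Z) | A = a]` satisfies, for `P_A`-almost every `a`,
`b̂(a) = E[(1 − ρ(a,X)/ρ̂(a,X))(μ̂(a,X) − μ(a,X))·ŵ(a,V) | A = a]
  + E[(τ(a,V) − τ̂(a,V))(ŵ(a,V) − w(a,V)) | A = a] + θ̂₀(a) − ∫ τ̂(a,v) dP_V(v)`. -/
theorem stmt_3 {𝒱 𝒮 Ω : Type*} [MeasurableSpace 𝒱] [MeasurableSpace 𝒮] [MeasurableSpace Ω]
    (P : Measure Ω) [IsProbabilityMeasure P]
    (V : Ω → 𝒱) (S : Ω → 𝒮) (A Y R : Ω → ℝ)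
    (hV : Measurable V) (hS : Measurable S) (hA : Measurable A)
    (hY : Measurable Y) (hR : Measurable R)
    (hY_bdd : ∃ C, ∀ ω, |Y ω| ≤ C)
    (hR01 : ∀ ω, R ω = 0 ∨ R ω = 1)
    -- conditional density π(a|v) of A given V, w.r.t. Lebesgue measure
    (π : ℝ → 𝒱 → ℝ) (hπ_meas : Measurable (Function.uncurry π))
    (hπ_nonneg : ∀ a v, 0 ≤ π a v)
    (hdens : ∀ g : ℝ → 𝒱 → ℝ, Measurable (Function.uncurry g) →
      (∃ C, ∀ a v, |g a v| ≤ C) →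
      ∫ ω, g (A ω) (V ω) ∂P = ∫ v, ∫ a, g a v * π a v ∂volume ∂(P.map V))
    (f : ℝ → ℝ) (hf : ∀ a, f a = ∫ v, π a v ∂(P.map V))
    -- positivity
    (hπ_pos : ∀ᵐ p ∂(volume.prod (P.map V)), 0 < π p.1 p.2)
    (c : ℝ) (hc : 0 < c)
    -- true labeling propensity ρ, a version of P(R=1 | A, X), bounded below
    (ρ : ℝ → 𝒱 × 𝒮 → ℝ) (hρ_meas : Measurable (Function.uncurry ρ))
    (hρ : ∀ h : ℝ → 𝒱 × 𝒮 → ℝ, Measurable (Function.uncurry h) →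
      (∃ C, ∀ a x, |h a x| ≤ C) →
      ∫ ω, R ω * h (A ω) (V ω, S ω) ∂P = ∫ ω, ρ (A ω) (V ω, S ω) * h (A ω) (V ω, S ω) ∂P)
    (hρc : ∀ᵐ ω ∂P, c ≤ ρ (A ω) (V ω, S ω))
    -- true outcome regression μ, a version of E[Y | A, X, R=1]
    (μ : ℝ → 𝒱 × 𝒮 → ℝ) (hμ_meas : Measurable (Function.uncurry μ))
    (hμ_bdd : ∃ C, ∀ a x, |μ a x| ≤ C)
    (hμ : ∀ h : ℝ → 𝒱 × 𝒮 → ℝ, Measurable (Function.uncurry h) →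
      (∃ C, ∀ a x, |h a x| ≤ C) →
      ∫ ω, R ω * Y ω * h (A ω) (V ω, S ω) ∂P
        = ∫ ω, R ω * μ (A ω) (V ω, S ω) * h (A ω) (V ω, S ω) ∂P)
    -- τ, a version of E[μ(A,X) | A, V]
    (τ : ℝ → 𝒱 → ℝ) (hτ_meas : Measurable (Function.uncurry τ))
    (hτ_bdd : ∃ C, ∀ a v, |τ a v| ≤ C)
    (hτ : ∀ h : ℝ → 𝒱 → ℝ, Measurable (Function.uncurry h) →
      (∃ C, ∀ a v, |h a v| ≤ C) →
      ∫ ω, μ (A ω) (V ω, S ω) * h (A ω) (V ω) ∂P = ∫ ω, τ (A ω) (V ω) * h (A ω) (V ω) ∂P)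
    -- dose-response function
    (θ : ℝ → ℝ) (hθ : ∀ a, θ a = ∫ v, τ a v ∂(P.map V))
    -- regular conditional distribution of Z given A = a
    (ν : Kernel ℝ Ω) [IsMarkovKernel ν]
    (hν : ∀ (u : ℝ → ℝ) (F : Ω → ℝ), Measurable u → (∃ C, ∀ a, |u a| ≤ C) →
      Measurable F → (∃ C, ∀ ω, |F ω| ≤ C) →
      ∫ ω, u (A ω) * F ω ∂P = ∫ a, u a * ∫ ω, F ω ∂(ν a) ∂(P.map A))
    -- stabilized weight
    (w : ℝ → 𝒱 → ℝ) (hw : ∀ a v, w a v = f a / π a v)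
    -- estimated nuisance functions
    (μhat : ℝ → 𝒱 × 𝒮 → ℝ) (hμhat_meas : Measurable (Function.uncurry μhat))
    (hμhat_bdd : ∃ C, ∀ a x, |μhat a x| ≤ C)
    (τhat : ℝ → 𝒱 → ℝ) (hτhat_meas : Measurable (Function.uncurry τhat))
    (hτhat_bdd : ∃ C, ∀ a v, |τhat a v| ≤ C)
    (ρhat : ℝ → 𝒱 × 𝒮 → ℝ) (hρhat_meas : Measurable (Function.uncurry ρhat))
    (hρhat_lb : ∀ a x, c ≤ ρhat a x)
    (what : ℝ → 𝒱 → ℝ) (hwhat_meas : Measurable (Function.uncurry what))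
    (hwhat_bdd : ∃ C, ∀ a v, |what a v| ≤ C)
    -- initial estimator from fixed covariate points v₁, …, v_m
    (m : ℕ) (hm : 0 < m) (vpt : Fin m → 𝒱)
    (θhat0 : ℝ → ℝ) (hθhat0 : ∀ a, θhat0 a = (m : ℝ)⁻¹ * ∑ i, τhat a (vpt i)) :
    ∀ᵐ a ∂(P.map A),
      ∫ ω,
          (((R ω * (Y ω - μhat (A ω) (V ω, S ω)) / ρhat (A ω) (V ω, S ω)
              + μhat (A ω) (V ω, S ω) - τhat (A ω) (V ω)) * what (A ω) (V ω)
            + θhat0 (A ω))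
          - ((R ω * (Y ω - μ (A ω) (V ω, S ω)) / ρ (A ω) (V ω, S ω)
              + μ (A ω) (V ω, S ω) - τ (A ω) (V ω)) * w (A ω) (V ω)
            + θ (A ω))) ∂(ν a)
        = (∫ ω, (1 - ρ a (V ω, S ω) / ρhat a (V ω, S ω))
              * (μhat a (V ω, S ω) - μ a (V ω, S ω)) * what a (V ω) ∂(ν a))
          + (∫ ω, (τ a (V ω) - τhat a (V ω)) * (what a (V ω) - w a (V ω)) ∂(ν a))
          + θhat0 a - ∫ v, τhat a v ∂(P.map V) := by
  have hX : Measurable (fun ω => (V ω, S ω)) := hV.prodMk hS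
  have hAX : Measurable (fun ω => (A ω, (V ω, S ω))) := hA.prodMk hX
  have hAV : Measurable (fun ω => (A ω, V ω)) := hA.prodMk hV
  have hJ := map_prodMk_eq_compProd hA hν
  have hρ1 := ae_propensity_le_one hA hX hR hR01 hρ_meas hρ
  have hw_meas : Measurable (Function.uncurry w) := measurable_weight hπ_meas hf hw
  -- every factor except `w` is essentially bounded
  have bX : ∀ {g : ℝ → 𝒱 × 𝒮 → ℝ}, Measurable (Function.uncurry g) →
      (∃ C, ∀ a x, |g a x| ≤ C) → MemLp (fun ω => g (A ω) (V ω, S ω)) ⊤ P :=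
    fun hg ⟨C, hC⟩ => memLp_top_of_bound (hg.comp hAX).aestronglyMeasurable C
      (ae_of_all _ fun ω => hC _ _)
  have bV : ∀ {g : ℝ → 𝒱 → ℝ}, Measurable (Function.uncurry g) →
      (∃ C, ∀ a x, |g a x| ≤ C) → MemLp (fun ω => g (A ω) (V ω)) ⊤ P :=
    fun hg ⟨C, hC⟩ => memLp_top_of_bound (hg.comp hAV).aestronglyMeasurable C
      (ae_of_all _ fun ω => hC _ _)
  have bR : MemLp R ⊤ P := memLp_top_of_bound hR.aestronglyMeasurable 1
    (ae_of_all _ fun ω => by rcases hR01 ω with h | h <;> simp [h])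
  have bY : MemLp Y ⊤ P := by
    obtain ⟨C, hC⟩ := hY_bdd
    exact memLp_top_of_bound hY.aestronglyMeasurable C (ae_of_all _ hC)
  have bμ := bX hμ_meas hμ_bdd
  have bμh := bX hμhat_meas hμhat_bdd
  have bτ := bV hτ_meas hτ_bdd
  have bτh := bV hτhat_meas hτhat_bdd
  have bwh := bV hwhat_meas hwhat_bdd
  have bρ : MemLp (fun ω => ρ (A ω) (V ω, S ω)) ⊤ P := by
    refine memLp_top_of_bound (hρ_meas.comp hAX).aestronglyMeasurable 1 ?_
    filter_upwards [hρ1, hρc] with ω h1 h2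
    rw [Real.norm_eq_abs, abs_of_nonneg (hc.le.trans h2)]
    exact h1
  have bρi : MemLp (fun ω => (ρ (A ω) (V ω, S ω))⁻¹) ⊤ P := by
    refine memLp_top_of_bound (hρ_meas.comp hAX).inv.aestronglyMeasurable c⁻¹ ?_
    filter_upwards [hρc] with ω h2
    rw [Real.norm_eq_abs, abs_of_nonneg (inv_nonneg.2 (hc.le.trans h2))]
    exact inv_anti₀ hc h2
  have bρhi : MemLp (fun ω => (ρhat (A ω) (V ω, S ω))⁻¹) ⊤ P := by
    refine bX (g := fun a x => (ρhat a x)⁻¹) hρhat_meas.inv ⟨c⁻¹, fun a x => ?_⟩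
    rw [abs_of_nonneg (inv_nonneg.2 (hc.le.trans (hρhat_lb a x)))]
    exact inv_anti₀ hc (hρhat_lb a x)
  have bRY := memLp_top_mul bR bY
  have bRμ := memLp_top_mul bR bμ
  have iw : Integrable (fun ω => w (A ω) (V ω)) P := by
    have := (weight_change_of_measure hV hA hπ_meas hπ_nonneg hdens hf hπ_pos hw
      (g := fun _ _ => 1) measurable_const ⟨1, fun _ _ => by simp⟩).2.1
    simpa using this
  have mulw : ∀ {F : Ω → ℝ}, MemLp F ⊤ P → Integrable (fun ω => F ω * w (A ω) (V ω)) P :=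
    fun hF => iw.mul_of_top_right hF
  have toI : ∀ {F : Ω → ℝ}, MemLp F ⊤ P → Integrable F P := fun hF => hF.integrable le_top
  have hfst : Measurable (fun p : ℝ × 𝒱 × 𝒮 => (p.1, p.2.1)) := by fun_prop
  have hwhat' : Measurable (fun p : ℝ × 𝒱 × 𝒮 => what p.1 p.2.1) := hwhat_meas.comp hfst
  have hw' : Measurable (fun p : ℝ × 𝒱 × 𝒮 => w p.1 p.2.1) := hw_meas.comp hfst
  have i1 : Integrable (fun ω => (R ω * Y ω - R ω * μ (A ω) (V ω, S ω))
      * (what (A ω) (V ω) * (ρhat (A ω) (V ω, S ω))⁻¹)) P :=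
    toI (memLp_top_mul (bRY.sub bRμ) (memLp_top_mul bwh bρhi))
  have i2 : Integrable (fun ω => (R ω - ρ (A ω) (V ω, S ω))
      * ((μ (A ω) (V ω, S ω) - μhat (A ω) (V ω, S ω)) * what (A ω) (V ω)
          * (ρhat (A ω) (V ω, S ω))⁻¹)) P :=
    toI (memLp_top_mul (bR.sub bρ) (memLp_top_mul (memLp_top_mul (bμ.sub bμh) bwh) bρhi))
  have i3 : Integrable (fun ω => (1 - ρ (A ω) (V ω, S ω) / ρhat (A ω) (V ω, S ω))
      * (μhat (A ω) (V ω, S ω) - μ (A ω) (V ω, S ω)) * what (A ω) (V ω)) P := by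
    simp only [div_eq_mul_inv]
    exact toI (memLp_top_mul (memLp_top_mul
      ((memLp_const (1 : ℝ)).sub (memLp_top_mul bρ bρhi)) (bμh.sub bμ)) bwh)
  have i4 : Integrable (fun ω => (μ (A ω) (V ω, S ω) - τ (A ω) (V ω)) * what (A ω) (V ω)) P :=
    toI (memLp_top_mul (bμ.sub bτ) bwh)
  have i5 : Integrable (fun ω => (τ (A ω) (V ω) - τhat (A ω) (V ω)) * what (A ω) (V ω)) P :=
    toI (memLp_top_mul (bτ.sub bτh) bwh)
  have i6 : Integrable (fun ω => (R ω * Y ω - R ω * μ (A ω) (V ω, S ω))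
      * ((ρ (A ω) (V ω, S ω))⁻¹ * w (A ω) (V ω))) P := by
    simp only [← mul_assoc]
    exact mulw (memLp_top_mul (bRY.sub bRμ) bρi)
  have i7 : Integrable (fun ω => (μ (A ω) (V ω, S ω) - τ (A ω) (V ω)) * w (A ω) (V ω)) P :=
    mulw (bμ.sub bτ)
  have i8 : Integrable (fun ω => (τ (A ω) (V ω) - τhat (A ω) (V ω)) * w (A ω) (V ω)) P :=
    mulw (bτ.sub bτh)
  have z1 := ae_integral_kernel_orthogonal hA hJ hX (toI bRY) (toI bRμ) hμ
    (k := fun a x => what a x.1 * (ρhat a x)⁻¹) (hwhat'.mul hρhat_meas.inv) i1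
  have z2 := ae_integral_kernel_orthogonal hA hJ hX (toI bR) (toI bρ) hρ
    (k := fun a x => (μ a x - μhat a x) * what a x.1 * (ρhat a x)⁻¹)
    (((hμ_meas.sub hμhat_meas).mul hwhat').mul hρhat_meas.inv) i2
  have z4 := ae_integral_kernel_orthogonal hA hJ hV (toI bμ) (toI bτ) hτ hwhat_meas i4
  have z6 := ae_integral_kernel_orthogonal hA hJ hX (toI bRY) (toI bRμ) hμ
    (k := fun a x => (ρ a x)⁻¹ * w a x.1) (hρ_meas.inv.mul hw') i6
  have z7 := ae_integral_kernel_orthogonal hA hJ hV (toI bμ) (toI bτ) hτ hw_meas i7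
  have z8 := ae_integral_kernel_weight hV hA hJ hπ_meas hπ_nonneg hdens hf hπ_pos hw
    (g := fun a v => τ a v - τhat a v) (hτ_meas.sub hτhat_meas) (by
      obtain ⟨C, hC⟩ := hτ_bdd
      obtain ⟨C', hC'⟩ := hτhat_bdd
      exact ⟨C + C', fun a v => (abs_sub _ _).trans (add_le_add (hC a v) (hC' a v))⟩)
  filter_upwards [ae_ae_fiber_eq hA hJ, z1, z2, z4, z6, z7, z8,
    ae_integrable_kernel hA hJ i1, ae_integrable_kernel hA hJ i2, ae_integrable_kernel hA hJ i3,
    ae_integrable_kernel hA hJ i4, ae_integrable_kernel hA hJ i5, ae_integrable_kernel hA hJ i6,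
    ae_integrable_kernel hA hJ i7, ae_integrable_kernel hA hJ i8]
    with a hfib z1 z2 z4 z6 z7 z8 j1 j2 j3 j4 j5 j6 j7 j8
  have hQ : IsProbabilityMeasure (P.map V) := Measure.isProbabilityMeasure_map hV.aemeasurable
  have hsec : ∀ {g : ℝ → 𝒱 → ℝ}, Measurable (Function.uncurry g) →
      (∃ C, ∀ a x, |g a x| ≤ C) → Integrable (g a) (P.map V) :=
    fun hg ⟨C, hC⟩ => .of_bound (hg.comp measurable_prodMk_left).aestronglyMeasurable C
      (ae_of_all _ (hC a))
  rw [integral_sub (hsec hτ_meas hτ_bdd) (hsec hτhat_meas hτhat_bdd)] at z8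
  -- on the fibre, `A` may be replaced by `a` and conversely
  have e3 : ∫ ω, (1 - ρ a (V ω, S ω) / ρhat a (V ω, S ω))
      * (μhat a (V ω, S ω) - μ a (V ω, S ω)) * what a (V ω) ∂(ν a)
      = ∫ ω, (1 - ρ (A ω) (V ω, S ω) / ρhat (A ω) (V ω, S ω))
      * (μhat (A ω) (V ω, S ω) - μ (A ω) (V ω, S ω)) * what (A ω) (V ω) ∂(ν a) :=
    integral_congr_ae (by filter_upwards [hfib] with ω hω; rw [hω])
  have e5 : ∫ ω, (τ a (V ω) - τhat a (V ω)) * (what a (V ω) - w a (V ω)) ∂(ν a)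
      = ∫ ω, (τ (A ω) (V ω) - τhat (A ω) (V ω)) * what (A ω) (V ω) ∂(ν a)
        - ∫ ω, (τ (A ω) (V ω) - τhat (A ω) (V ω)) * w (A ω) (V ω) ∂(ν a) := by
    rw [← integral_sub j5 j8]
    exact integral_congr_ae (by filter_upwards [hfib] with ω hω; rw [hω]; ring)
  rw [e3, e5, z8]
  have jc : Integrable (fun _ : Ω => θhat0 a - θ a) (ν a) := integrable_const _
  have hsum := integral_add (((((((j1.add j2).add j3).add j4).add j5).sub j6).sub j7)) jc
  have hsum' : ∀ {F₁ F₂ : Ω → ℝ}, Integrable F₁ (ν a) → Integrable F₂ (ν a) →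
      ∫ ω, (F₁ + F₂) ω ∂(ν a) = ∫ ω, F₁ ω ∂(ν a) + ∫ ω, F₂ ω ∂(ν a) :=
    fun h₁ h₂ => integral_add h₁ h₂
  have hsub' : ∀ {F₁ F₂ : Ω → ℝ}, Integrable F₁ (ν a) → Integrable F₂ (ν a) →
      ∫ ω, (F₁ - F₂) ω ∂(ν a) = ∫ ω, F₁ ω ∂(ν a) - ∫ ω, F₂ ω ∂(ν a) :=
    fun h₁ h₂ => integral_sub h₁ h₂
  rw [hsub' (((((j1.add j2).add j3).add j4).add j5).sub j6) j7,
    hsub' ((((j1.add j2).add j3).add j4).add j5) j6,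
    hsum' (((j1.add j2).add j3).add j4) j5, hsum' ((j1.add j2).add j3) j4,
    hsum' (j1.add j2) j3, hsum' j1 j2, z1, z2, z4, z6, z7, integral_const] at hsum
  simp only [probReal_univ, one_smul] at hsum
  refine (integral_congr_ae ?_).trans (hsum.trans ?_)
  · filter_upwards [hfib] with ω hω
    simp only [Pi.add_apply, Pi.sub_apply, hω]
    ring
  · rw [hθ]
    ring
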